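/- arXiv:2106.06121 — 2 statements merged into one kernel-verified Lean document; each statement's English description precedes it below -/
import Mathlib

section
/- There exist universal constants c_b > 0, C̄ > 1 and C̃ > 1 so that the following holds. Let n be a sufficiently large integer (n greater than a universal constant), let θ ∈ [1/(c_b·n), c_b], and let Y_1,…,Y_n be i.i.d. Bernoulli random variables with parameter θ. Then for every real r with 0 ≤ r ≤ n − θ·n and θ·n + r ∈ ℕ: if r ≥ θ·n/10 then ℙ{ Σ_{i=1}^n Y_i ≥ θ·n + r } ≥ (1/C̄)·exp( −C̄·log(2 + r/(θ·n))·r ), while if 0 ≤ r < θ·n/10 then ℙ{ Σ_{i=1}^n Y_i ≥ θ·n + r } ≥ (1/C̃)·exp( −C̃·r²/(θ·n + r) ). -/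
open MeasureTheory ENNReal

/-- `μ` is the Bernoulli measure with parameter `θ` (as a measure on `ℝ`):
it is a probability measure giving mass `θ` to `{1}` and mass `1-θ` to `{0}`. -/
def IsBernoulli (μ : Measure ℝ) (θ : ℝ) : Prop :=
  IsProbabilityMeasure μ ∧ μ {1} = ENNReal.ofReal θ ∧ μ {0} = ENNReal.ofReal (1 - θ)

open ProbabilityTheory unitInterval

/-!
The sum of the coordinates has law `Bin(n, θ)`; write `m = θ * n` for its mean and let `k = m + r`.

If `r` is at least of order `m`, the single value `k` already has enough mass: its probability is at
least `(m / k) ^ k * exp (-2 * m)`, and both `k` and `m` are `O(r)`.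

If `r` is small compared with `m`, then by Chebyshev's inequality the window of radius `2 * √m`
around `m` has mass at least `1 / 2`. Below `m + t` the ratio of consecutive binomial weights is at
least `exp (-2 * t / m)`, so translating the window by about `r + 2 * √m`, past `k`, costs at most a
factor `exp (-O((r + √m) ^ 2 / m)) = exp (-O(r ^ 2 / m + 1))`.
-/

theorem exp_neg_two_mul_le_one_sub {x : ℝ} (hx₀ : 0 ≤ x) (hx : x ≤ 1 / 2) :
    Real.exp (-(2 * x)) ≤ 1 - x := by
  rw [Real.exp_neg, inv_le_iff_one_le_mul₀ (Real.exp_pos _)]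
  nlinarith [Real.add_one_le_exp (2 * x)]

theorem div_pow_le_choose {α : Type*} [Field α] [LinearOrder α] [IsStrictOrderedRing α] {k n : ℕ}
    (hkn : k ≤ n) : (n / k : α) ^ k ≤ n.choose k := by
  induction k generalizing n with
  | zero => simp
  | succ k ih =>
    obtain ⟨m, rfl⟩ : ∃ m, n = m + 1 := ⟨n - 1, by omega⟩
    rcases k.eq_zero_or_pos with rfl | hk
    · simp
    have hkm : k ≤ m := by omega
    have hdiv : ((m + 1 : ℕ) / (k + 1 : ℕ) : α) ≤ m / k := by
      rw [div_le_div_iff₀ (by positivity) (by positivity)]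
      norm_cast
      lia
    calc ((m + 1 : ℕ) / (k + 1 : ℕ) : α) ^ (k + 1)
        = (m + 1 : ℕ) / (k + 1 : ℕ) * ((m + 1 : ℕ) / (k + 1 : ℕ) : α) ^ k := pow_succ' _ _
      _ ≤ (m + 1 : ℕ) / (k + 1 : ℕ) * (m / k : α) ^ k := by gcongr
      _ ≤ (m + 1 : ℕ) / (k + 1 : ℕ) * m.choose k := by gcongr; exact ih hkm
      _ = (m + 1).choose (k + 1) := by
        rw [div_mul_eq_mul_div, div_eq_iff (by positivity)]
        exact_mod_cast m.add_one_mul_choose_eq k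

theorem add_mul_log_add_two_mul_le {m r : ℝ} (hm : 0 < m) (hr : m / 10 ≤ r) :
    (m + r) * Real.log ((m + r) / m) + 2 * m ≤ 51 * Real.log (2 + r / m) * r := by
  have hr₀ : 0 < r := by linarith
  have hratio : 0 < r / m := by positivity
  have hlog : Real.log ((m + r) / m) ≤ Real.log (2 + r / m) := by
    gcongr
    rw [add_div, div_self hm.ne']
    linarith
  have hlog_two : 1 / 2 ≤ Real.log (2 + r / m) := by
    have : Real.log 2 ≤ Real.log (2 + r / m) := by gcongr; linarith
    linarith [Real.log_two_gt_d9]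
  calc (m + r) * Real.log ((m + r) / m) + 2 * m
      ≤ 11 * r * Real.log (2 + r / m) + 40 * r * (1 / 2) := by
        refine add_le_add (mul_le_mul (by linarith) hlog (Real.log_nonneg ?_) (by linarith)) ?_
        · rw [one_le_div hm]; linarith
        · linarith
    _ ≤ 11 * r * Real.log (2 + r / m) + 40 * r * Real.log (2 + r / m) := by gcongr
    _ = 51 * Real.log (2 + r / m) * r := by ring

section SumOfBernoulli

variable {ι : Type*} [Fintype ι] {μ : Measure ℝ}

theorem pi_singleton_indicator_one [SigmaFinite μ] (A : Finset ι) :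
    Measure.pi (fun _ : ι => μ) {(A : Set ι).indicator 1} =
      μ {1} ^ A.card * μ {0} ^ (Fintype.card ι - A.card) := by
  classical
  have hmass (i : ι) : μ {(A : Set ι).indicator 1 i} = if i ∈ A then μ {1} else μ {0} := by
    by_cases hi : i ∈ A <;> simp [hi]
  simp only [Measure.pi_singleton, hmass, Finset.prod_ite, Finset.prod_const,
    Finset.filter_univ_mem, Finset.filter_not, Finset.card_univ_sdiff]

theorem choose_mul_pow_mul_pow_le_pi_sum_eq [SigmaFinite μ] (k : ℕ) :
    (Fintype.card ι).choose k * (μ {1} ^ k * μ {0} ^ (Fintype.card ι - k)) ≤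
      Measure.pi (fun _ : ι => μ) {x | ∑ i, x i = k} := by
  classical
  set vertices : Finset (ι → ℝ) :=
    (Finset.univ.powersetCard k).image fun A : Finset ι => (A : Set ι).indicator 1
  have hinj : Function.Injective fun A : Finset ι => (A : Set ι).indicator (1 : ι → ℝ) :=
    fun A B h => Finset.coe_injective (Set.indicator_one_inj ℝ h)
  have hsub : (vertices : Set (ι → ℝ)) ⊆ {x | ∑ i, x i = k} := by
    intro x hx
    obtain ⟨A, hA, rfl⟩ := Finset.mem_image.1 hx
    simp [Set.indicator_apply, (Finset.mem_powersetCard.1 hA).2]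
  calc (Fintype.card ι).choose k * (μ {1} ^ k * μ {0} ^ (Fintype.card ι - k))
      = ∑ A ∈ (Finset.univ : Finset ι).powersetCard k,
          Measure.pi (fun _ : ι => μ) {(A : Set ι).indicator 1} := by
        rw [Finset.sum_congr rfl fun A hA =>
          (pi_singleton_indicator_one A).trans (by rw [(Finset.mem_powersetCard.1 hA).2])]
        rw [Finset.sum_const, Finset.card_powersetCard, Finset.card_univ, nsmul_eq_mul]
    _ = Measure.pi (fun _ : ι => μ) vertices := by
        rw [← sum_measure_singleton, Finset.sum_image hinj.injOn]
    _ ≤ Measure.pi (fun _ : ι => μ) {x | ∑ i, x i = k} := measure_mono hsub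

theorem IsBernoulli.binomial_singleton_le_pi_sum_eq {p : I} (hμ : IsBernoulli μ p) (k : ℕ) :
    Bin(Fintype.card ι, p) {k} ≤ Measure.pi (fun _ : ι => μ) {x | ∑ i, x i = k} := by
  obtain ⟨_, h₁, h₀⟩ := hμ
  have hp : 0 ≤ 1 - (p : ℝ) := sub_nonneg.2 p.2.2
  refine le_trans (le_of_eq ?_) (choose_mul_pow_mul_pow_le_pi_sum_eq k)
  rw [binomial_singleton, h₁, h₀, ← ofReal_pow p.2.1, ← ofReal_pow hp,
    ← ofReal_mul (pow_nonneg p.2.1 k), mul_assoc, ofReal_mul (Nat.cast_nonneg _), ofReal_natCast]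

theorem IsBernoulli.map_sum_pi {p : I} (hμ : IsBernoulli μ p) :
    (Measure.pi fun _ : ι => μ).map (fun x => ∑ i, x i) = Bin(ℝ, Fintype.card ι, p) := by
  have := hμ.1
  have hmeas : Measurable fun x : ι → ℝ => ∑ i, x i := by fun_prop
  have : IsProbabilityMeasure ((Measure.pi fun _ : ι => μ).map fun x => ∑ i, x i) :=
    Measure.isProbabilityMeasure_map hmeas.aemeasurable
  let level (k : ℕ) : Set (ι → ℝ) := {x | ∑ i, x i = k}
  have hlevel (k : ℕ) : MeasurableSet (level k) := hmeas (measurableSet_singleton _)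
  have hdisj : Pairwise (Function.onFun Disjoint level) := fun j k hjk =>
    Set.disjoint_left.2 fun x hj hk => hjk (by exact_mod_cast hj.symm.trans hk)
  -- Two probability measures coincide as soon as one dominates the other.
  refine (Measure.eq_of_le_of_isProbabilityMeasure (Measure.le_iff.2 fun s hs => ?_)).symm
  set S : Set ℕ := Nat.cast ⁻¹' s
  have hsub : ⋃ k ∈ S, level k ⊆ (fun x => ∑ i, x i) ⁻¹' s := by
    refine Set.iUnion₂_subset fun k hk x (hx : ∑ i, x i = k) => ?_
    rwa [Set.mem_preimage, hx]
  calc Bin(ℝ, Fintype.card ι, p) s = Bin(Fintype.card ι, p) (⋃ k ∈ S, {k}) := by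
        rw [Measure.map_apply .of_discrete hs, Set.biUnion_of_singleton]
    _ = ∑' k : S, Bin(Fintype.card ι, p) {(k : ℕ)} :=
        measure_biUnion S.to_countable (fun _ _ _ _ h => by simpa using h) fun _ _ => .of_discrete
    _ ≤ ∑' k : S, Measure.pi (fun _ : ι => μ) (level k) :=
        ENNReal.tsum_le_tsum fun k => hμ.binomial_singleton_le_pi_sum_eq k
    _ = Measure.pi (fun _ : ι => μ) (⋃ k ∈ S, level k) :=
        (measure_biUnion S.to_countable (hdisj.set_pairwise S) fun k _ => hlevel k).symm
    _ ≤ (Measure.pi fun _ : ι => μ).map (fun x => ∑ i, x i) s := by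
        rw [Measure.map_apply hmeas hs]
        exact measure_mono hsub

theorem IsBernoulli.pi_le_sum {p : I} (hμ : IsBernoulli μ p) (k : ℕ) :
    Measure.pi (fun _ : ι => μ) {x | (k : ℝ) ≤ ∑ i, x i} =
      ENNReal.ofReal (Bin(Fintype.card ι, p).real (Set.Ici k)) := by
  rw [ofReal_measureReal]
  calc Measure.pi (fun _ : ι => μ) {x | (k : ℝ) ≤ ∑ i, x i}
      = (Measure.pi fun _ : ι => μ).map (fun x => ∑ i, x i) (Set.Ici (k : ℝ)) :=
        (Measure.map_apply (f := fun x : ι → ℝ => ∑ i, x i) (by fun_prop) measurableSet_Ici).symm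
    _ = Bin(Fintype.card ι, p) (Set.Ici k) := by
        rw [hμ.map_sum_pi, Measure.map_apply .of_discrete measurableSet_Ici, Nat.preimage_Ici,
          Nat.ceil_natCast]

end SumOfBernoulli

section Binomial

variable {n j k : ℕ} {p : I}

theorem binomial_real_singleton_succ_mul (n j : ℕ) (p : I) :
    Bin(n, p).real {j + 1} * ((j + 1) * (1 - p)) = Bin(n, p).real {j} * ((n - j) * p) := by
  simp only [binomial_real_singleton]
  rcases lt_trichotomy j n with hjn | rfl | hnj
  · obtain ⟨d, rfl⟩ := Nat.exists_eq_add_of_lt hjn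
    have hchoose : ((j + d + 1).choose (j + 1) : ℝ) * (j + 1) = (j + d + 1).choose j * (d + 1) := by
      have h := (j + d + 1).choose_succ_right_eq j
      rw [show j + d + 1 - j = d + 1 by omega] at h
      exact_mod_cast h
    rw [show j + d + 1 - (j + 1) = d by omega, show j + d + 1 - j = d + 1 by omega]
    push_cast
    linear_combination (p : ℝ) ^ (j + 1) * (1 - p) ^ (d + 1) * hchoose
  · simp
  · simp [Nat.choose_eq_zero_of_lt, hnj, hnj.trans (Nat.lt_succ_self j)]

theorem integral_sq_sub_binomial (n : ℕ) (p : I) :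
    ∫ j, ((p : ℝ) * n - j : ℝ) ^ 2 ∂Bin(n, p) = (p : ℝ) * n * (1 - p) := by
  have hvar := congrArg (Polynomial.eval (p : ℝ)) (bernsteinPolynomial.variance ℝ n)
  simp only [bernsteinPolynomial, Polynomial.eval_finsetSum, Polynomial.eval_mul,
    Polynomial.eval_pow, Polynomial.eval_sub, Polynomial.eval_X,
    Polynomial.eval_natCast, Polynomial.eval_one, nsmul_eq_mul] at hvar
  rw [integral_binomial, mul_comm (p : ℝ), ← hvar, Nat.range_succ_eq_Iic]
  exact Finset.sum_congr rfl fun j _ => by rw [smul_eq_mul, mul_comm]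

theorem one_sub_div_sq_le_binomial_real_abs_sub_le (n : ℕ) (p : I) {t : ℝ} (ht : 0 < t) :
    1 - (p : ℝ) * n * (1 - p) / t ^ 2 ≤ Bin(n, p).real {j : ℕ | |((p : ℝ) * n - j : ℝ)| ≤ t} := by
  have hmarkov := mul_meas_ge_le_integral_of_nonneg (μ := Bin(n, p))
    (.of_forall fun j : ℕ => sq_nonneg ((p : ℝ) * n - j : ℝ)) (integrable_binomial _) (t ^ 2)
  have hcompl : Bin(n, p).real {j : ℕ | |((p : ℝ) * n - j : ℝ)| ≤ t}ᶜ ≤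
      (p : ℝ) * n * (1 - p) / t ^ 2 := by
    rw [le_div_iff₀' (by positivity), ← integral_sq_sub_binomial]
    refine (mul_le_mul_of_nonneg_left (measureReal_mono fun j hj => ?_) (sq_nonneg t)).trans hmarkov
    have hj : t < |(p : ℝ) * n - j| := not_le.1 hj
    exact (pow_le_pow_left₀ ht.le hj.le 2).trans_eq (sq_abs _)
  rw [probReal_compl_eq_one_sub .of_discrete] at hcompl
  linarith

theorem exp_mul_binomial_real_singleton_le_succ {t : ℝ} (hp : (p : ℝ) ≤ 1 / 4) (ht₀ : 0 ≤ t)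
    (ht : t ≤ (p : ℝ) * n) (hj : (j + 1 : ℝ) ≤ (p : ℝ) * n + t) :
    Real.exp (-(2 * t / ((p : ℝ) * n))) * Bin(n, p).real {j} ≤ Bin(n, p).real {j + 1} := by
  have hp₀ : 0 ≤ (p : ℝ) := p.2.1
  have hm : 0 < p * (n : ℝ) := by have : (0 : ℝ) ≤ j := j.cast_nonneg; linarith
  have hexp : Real.exp (-(2 * t / ((p : ℝ) * n))) ≤ (p : ℝ) * n / ((p : ℝ) * n + 2 * t) := by
    rw [Real.exp_neg, inv_le_comm₀ (Real.exp_pos _) (by positivity), inv_div, add_div,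
      div_self hm.ne', add_comm]
    exact Real.add_one_le_exp _
  have hratio : (p : ℝ) * n / ((p : ℝ) * n + 2 * t) * ((j + 1) * (1 - p)) ≤ (n - j) * p := by
    have hpj : (p : ℝ) * (j + 1) ≤ (p : ℝ) * n / 2 := by nlinarith
    rw [div_mul_eq_mul_div, div_le_iff₀ (by positivity)]
    nlinarith [mul_le_mul_of_nonneg_left hpj ht₀]
  have hpos : 0 < ((j : ℝ) + 1) * (1 - p) := mul_pos (by positivity) (by linarith)
  refine le_of_mul_le_mul_right ?_ hpos
  rw [binomial_real_singleton_succ_mul, mul_right_comm, mul_comm (Bin(n, p).real {j})]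
  exact mul_le_mul_of_nonneg_right
    ((mul_le_mul_of_nonneg_right hexp hpos.le).trans hratio) measureReal_nonneg

theorem exp_pow_mul_binomial_real_singleton_le_add {t : ℝ} (hp : (p : ℝ) ≤ 1 / 4) (ht₀ : 0 ≤ t)
    (ht : t ≤ (p : ℝ) * n) {s : ℕ} (hjs : (j + s : ℝ) ≤ (p : ℝ) * n + t) :
    Real.exp (-(2 * t / ((p : ℝ) * n))) ^ s * Bin(n, p).real {j} ≤ Bin(n, p).real {j + s} := by
  induction s with
  | zero => simp
  | succ s ih =>
    push_cast at hjs
    calc Real.exp (-(2 * t / ((p : ℝ) * n))) ^ (s + 1) * Bin(n, p).real {j}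
        = Real.exp (-(2 * t / ((p : ℝ) * n))) *
            (Real.exp (-(2 * t / ((p : ℝ) * n))) ^ s * Bin(n, p).real {j}) := by ring
      _ ≤ Real.exp (-(2 * t / ((p : ℝ) * n))) * Bin(n, p).real {j + s} := by
          gcongr
          exact ih (by linarith)
      _ ≤ Bin(n, p).real {j + s + 1} :=
          exp_mul_binomial_real_singleton_le_succ hp ht₀ ht (by push_cast; linarith)

theorem exp_pow_mul_binomial_real_le_Ici {t : ℝ} (hp : (p : ℝ) ≤ 1 / 4) (ht₀ : 0 ≤ t)
    (ht : t ≤ (p : ℝ) * n) {s : ℕ} {S : Set ℕ} (hkS : ∀ j ∈ S, k ≤ j + s)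
    (hSt : ∀ j ∈ S, (j + s : ℝ) ≤ (p : ℝ) * n + t) :
    Real.exp (-(2 * t / ((p : ℝ) * n))) ^ s * Bin(n, p).real S ≤ Bin(n, p).real (Set.Ici k) := by
  classical
  obtain ⟨F, rfl⟩ : ∃ F : Finset ℕ, (F : Set ℕ) = S := Set.Finite.exists_finset_coe <|
    (Set.finite_Iic ⌊(p : ℝ) * n + t⌋₊).subset fun j hj =>
      Nat.le_floor (by linarith [hSt j hj, s.cast_nonneg (α := ℝ)])
  calc Real.exp (-(2 * t / ((p : ℝ) * n))) ^ s * Bin(n, p).real F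
      = ∑ j ∈ F, Real.exp (-(2 * t / ((p : ℝ) * n))) ^ s * Bin(n, p).real {j} := by
        rw [← sum_measureReal_singleton, Finset.mul_sum]
    _ ≤ ∑ j ∈ F, Bin(n, p).real {j + s} := Finset.sum_le_sum fun j hj =>
        exp_pow_mul_binomial_real_singleton_le_add hp ht₀ ht (hSt j hj)
    _ = Bin(n, p).real (F.map (addRightEmbedding s)) := by
        rw [← sum_measureReal_singleton, Finset.sum_map]
        rfl
    _ ≤ Bin(n, p).real (Set.Ici k) := measureReal_mono <| by
        simpa [Set.subset_def] using hkS

theorem exp_le_binomial_real_Ici {r : ℝ} (hp : (p : ℝ) ≤ 1 / 4) (hm : 1 ≤ p * (n : ℝ))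
    (hr₀ : 0 ≤ r) (hr : r + 5 * √((p : ℝ) * n) ≤ (p : ℝ) * n)
    (hk : (k : ℝ) ≤ (p : ℝ) * n + r) :
    1 / 2 * Real.exp (-(4 * r ^ 2 / ((p : ℝ) * n)) - 100) ≤ Bin(n, p).real (Set.Ici k) := by
  have hm₀ : 0 < p * (n : ℝ) := by linarith
  have hd : 1 ≤ √((p : ℝ) * n) := Real.one_le_sqrt.2 hm
  have hd_sq : √((p : ℝ) * n) ^ 2 = (p : ℝ) * n := Real.sq_sqrt hm₀.le
  set d := √((p : ℝ) * n)
  have hs_ge : r + 2 * d ≤ ⌈r + 2 * d⌉₊ := Nat.le_ceil _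
  have hs_lt : (⌈r + 2 * d⌉₊ : ℝ) < r + 2 * d + 1 := Nat.ceil_lt_add_one (by positivity)
  set s := ⌈r + 2 * d⌉₊
  set window := {j : ℕ | |((p : ℝ) * n - j : ℝ)| ≤ 2 * d}
  have hwindow : 1 / 2 ≤ Bin(n, p).real window := by
    refine le_trans ?_ (one_sub_div_sq_le_binomial_real_abs_sub_le n p (by positivity))
    have : (p : ℝ) * n * (1 - p) / (2 * d) ^ 2 ≤ 1 / 2 := by
      rw [mul_pow, hd_sq, div_le_iff₀ (by positivity)]
      nlinarith [p.2.1]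
    linarith
  have hcost : Real.exp (-(4 * r ^ 2 / ((p : ℝ) * n)) - 100) ≤
      Real.exp (-(2 * (r + 5 * d) / ((p : ℝ) * n))) ^ s := by
    have hs : s * (2 * (r + 5 * d)) ≤ 4 * r ^ 2 + 100 * ((p : ℝ) * n) := by
      nlinarith [sq_nonneg (r - 5 * d)]
    have hdiv := div_le_div_of_nonneg_right hs hm₀.le
    rw [add_div, mul_div_cancel_right₀ _ hm₀.ne', mul_div_assoc] at hdiv
    rw [← Real.exp_nat_mul, Real.exp_le_exp]
    linarith
  calc 1 / 2 * Real.exp (-(4 * r ^ 2 / ((p : ℝ) * n)) - 100)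
      ≤ Bin(n, p).real window * Real.exp (-(2 * (r + 5 * d) / ((p : ℝ) * n))) ^ s := by gcongr
    _ = Real.exp (-(2 * (r + 5 * d) / ((p : ℝ) * n))) ^ s * Bin(n, p).real window := mul_comm _ _
    _ ≤ Bin(n, p).real (Set.Ici k) := by
      refine exp_pow_mul_binomial_real_le_Ici hp (by positivity) hr (fun j hj => ?_) fun j hj => ?_
      · have hj : |(p : ℝ) * n - j| ≤ 2 * d := hj
        have : (k : ℝ) ≤ j + s := by linarith [(abs_le.1 hj).2]
        exact_mod_cast this
      · have hj : |(p : ℝ) * n - j| ≤ 2 * d := hj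
        linarith [(abs_le.1 hj).1]

theorem inv_mul_exp_sq_div_le_binomial_real_Ici {r C : ℝ} (hp : (p : ℝ) ≤ 1 / 4)
    (hm : 100 ≤ p * (n : ℝ)) (hr₀ : 0 ≤ r) (hr : r ≤ (p : ℝ) * n / 2)
    (hk : (k : ℝ) ≤ (p : ℝ) * n + r) (hC : 2 * Real.exp 100 ≤ C) :
    C⁻¹ * Real.exp (-(C * r ^ 2 / (p * n + r))) ≤ Bin(n, p).real (Set.Ici k) := by
  have : 0 < p * (n : ℝ) := by linarith
  have hC₈ : 8 ≤ C := by linarith [Real.add_one_le_exp 100]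
  have hsqrt : √((p : ℝ) * n) ≤ (p : ℝ) * n / 10 := Real.sqrt_le_iff.2 ⟨by linarith, by nlinarith⟩
  have hsq : 4 * r ^ 2 / ((p : ℝ) * n) ≤ C * r ^ 2 / (p * n + r) :=
    calc 4 * r ^ 2 / ((p : ℝ) * n) = 8 * r ^ 2 / ((p : ℝ) * n + p * n) := by field
      _ ≤ C * r ^ 2 / (p * n + r) := by gcongr; linarith
  calc C⁻¹ * Real.exp (-(C * r ^ 2 / (p * n + r)))
      ≤ (2 * Real.exp 100)⁻¹ * Real.exp (-(4 * r ^ 2 / ((p : ℝ) * n))) := by gcongr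
    _ = 1 / 2 * Real.exp (-(4 * r ^ 2 / ((p : ℝ) * n)) - 100) := by rw [Real.exp_sub]; field
    _ ≤ Bin(n, p).real (Set.Ici k) :=
        exp_le_binomial_real_Ici hp (by linarith) hr₀ (by linarith) hk

theorem div_pow_mul_exp_le_binomial_real_singleton (hp : (p : ℝ) ≤ 1 / 2) (hkn : k ≤ n) :
    ((p : ℝ) * n / k) ^ k * Real.exp (-(2 * ((p : ℝ) * n))) ≤ Bin(n, p).real {k} := by
  have hp₀ : 0 ≤ (p : ℝ) := p.2.1
  have hp₁ : 0 ≤ 1 - (p : ℝ) := by linarith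
  have hexp : Real.exp (-(2 * ((p : ℝ) * n))) ≤ (1 - p : ℝ) ^ (n - k) :=
    calc Real.exp (-(2 * ((p : ℝ) * n))) = Real.exp (-(2 * p)) ^ n := by
          rw [← Real.exp_nat_mul]
          ring_nf
      _ ≤ (1 - p : ℝ) ^ n := by gcongr; exact exp_neg_two_mul_le_one_sub hp₀ hp
      _ ≤ (1 - p : ℝ) ^ (n - k) := pow_le_pow_of_le_one hp₁ (by linarith) (n.sub_le k)
  calc ((p : ℝ) * n / k : ℝ) ^ k * Real.exp (-(2 * ((p : ℝ) * n)))
      = (n / k : ℝ) ^ k * p ^ k * Real.exp (-(2 * ((p : ℝ) * n))) := by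
        rw [← mul_pow, div_mul_eq_mul_div, mul_comm (n : ℝ)]
    _ ≤ n.choose k * p ^ k * (1 - p) ^ (n - k) := by gcongr; exact div_pow_le_choose hkn
    _ = Bin(n, p).real {k} := (binomial_real_singleton n k p).symm

theorem exp_log_le_binomial_real_singleton {r : ℝ} (hp : (p : ℝ) ≤ 1 / 2)
    (hm : 0 < (p : ℝ) * n) (hkn : k ≤ n) (hk : (k : ℝ) = (p : ℝ) * n + r)
    (hr : (p : ℝ) * n / 10 ≤ r) :
    Real.exp (-(51 * Real.log (2 + r / ((p : ℝ) * n)) * r)) ≤ Bin(n, p).real {k} := by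
  have hk₀ : 0 < (k : ℝ) := by linarith
  have hpow : ((p : ℝ) * n / k : ℝ) ^ k = Real.exp (-(k * Real.log (k / ((p : ℝ) * n)))) := by
    rw [← mul_neg, Real.exp_nat_mul, ← Real.log_inv, inv_div, Real.exp_log (by positivity)]
  calc Real.exp (-(51 * Real.log (2 + r / ((p : ℝ) * n)) * r))
      ≤ Real.exp (-(k * Real.log (k / ((p : ℝ) * n)) + 2 * ((p : ℝ) * n))) := by
        rw [hk]
        gcongr
        exact add_mul_log_add_two_mul_le hm hr
    _ = ((p : ℝ) * n / k) ^ k * Real.exp (-(2 * ((p : ℝ) * n))) := by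
        rw [neg_add, Real.exp_add, hpow]
    _ ≤ Bin(n, p).real {k} := div_pow_mul_exp_le_binomial_real_singleton hp hkn

end Binomial

theorem binomial_tail_lower_bound_integer_points :
    ∃ cb Cbar Ctil : ℝ, 0 < cb ∧ 1 < Cbar ∧ 1 < Ctil ∧
    ∃ N : ℕ, ∀ n : ℕ, N ≤ n →
      ∀ θ : ℝ, 1 / (cb * n) ≤ θ → θ ≤ cb →
      ∀ μ : Measure ℝ, IsBernoulli μ θ →
      ∀ r : ℝ, 0 ≤ r → r ≤ n - θ * n → (∃ k : ℕ, (k : ℝ) = θ * n + r) →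
        (θ * n / 10 ≤ r →
          ENNReal.ofReal (Cbar⁻¹ * Real.exp (-(Cbar * Real.log (2 + r / (θ * n)) * r))) ≤
            (Measure.pi fun _ : Fin n => μ) {x | θ * n + r ≤ ∑ i, x i}) ∧
        (r < θ * n / 10 →
          ENNReal.ofReal (Ctil⁻¹ * Real.exp (-(Ctil * r ^ 2 / (θ * n + r)))) ≤
            (Measure.pi fun _ : Fin n => μ) {x | θ * n + r ≤ ∑ i, x i}) := by
  refine ⟨1 / 100, 51, 2 * Real.exp 100, by norm_num, by norm_num,
    by linarith [Real.add_one_le_exp 100], 1, fun n hn θ hθ_ge hθ_le μ hμ r hr₀ hrn ⟨k, hk⟩ => ?_⟩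
  have hn₀ : (0 : ℝ) < n := by exact_mod_cast hn
  have hm : 100 ≤ θ * n := by
    rw [div_le_iff₀ (by positivity)] at hθ_ge
    linarith
  have hθ₀ : 0 < θ := pos_of_mul_pos_left (by linarith) hn₀.le
  lift θ to unitInterval using ⟨hθ₀.le, by linarith⟩
  have hkn : k ≤ n := by exact_mod_cast (by linarith : (k : ℝ) ≤ n)
  rw [← hk, hμ.pi_le_sum k, Fintype.card_fin]
  refine ⟨fun hr => ofReal_le_ofReal ?_, fun hr => ofReal_le_ofReal ?_⟩
  · calc (51 : ℝ)⁻¹ * Real.exp (-(51 * Real.log (2 + r / (θ * n)) * r))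
        ≤ Real.exp (-(51 * Real.log (2 + r / (θ * n)) * r)) :=
          mul_le_of_le_one_left (Real.exp_pos _).le (by norm_num)
      _ ≤ Bin(n, θ).real {k} :=
          exp_log_le_binomial_real_singleton (by linarith) (by linarith) hkn hk hr
      _ ≤ Bin(n, θ).real (Set.Ici k) := measureReal_mono (by simp)
  · rw [hk]
    exact inv_mul_exp_sq_div_le_binomial_real_Ici (by linarith) hm hr₀ (by linarith) hk.le le_rfl
end

section
/- There exist universal constants c_b > 0 and C̃_b > 1 so that the following holds. Let n be a sufficiently large integer (n greater than a universal constant), let α > 0, and let θ ∈ [1/(c_b·n), c_b]. Let Y_1,…,Y_n be i.i.d. Bernoulli random variables with parameter θ, and set X = (X_1,…,X_n) with X_i = α·Y_i for each i. Then for every median m of ‖X‖₂ and every t ∈ [0, α·√n/4], one has ℙ{ ‖X‖₂ ≥ m + t } ≥ (1/C̃_b)·exp( −C̃_b · log(2 + t²/(θ·n·α²)) · t²/α² ). -/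
open MeasureTheory ENNReal

/-- `m` is a median of the real random variable `Z` under `μ`. -/
def IsMedian {Ω : Type*} [MeasurableSpace Ω] (μ : Measure Ω) (Z : Ω → ℝ) (m : ℝ) : Prop :=
  2⁻¹ ≤ μ {ω | m ≤ Z ω} ∧ 2⁻¹ ≤ μ {ω | Z ω ≤ m}

/-- The Euclidean norm on `Fin n → ℝ`. -/
noncomputable def euclNorm {n : ℕ} (x : Fin n → ℝ) : ℝ := Real.sqrt (∑ i, (x i) ^ 2)

/-!
Write `S = ∑ Yᵢ`, so that `‖X‖₂ = α √S`. Under the product of Bernoulli(`p`) laws, `√S` is within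
`2` of `√(n p)` with probability at least `3/4`, by Chebyshev; hence `m ≤ α (√(n θ) + 2)`, and after
changing the parameter to the `η` with `√(n η) = √(n θ) + 4 + t / α` the event `m + t ≤ ‖X‖₂` has
probability at least `1/2`. The relative entropy of the new product measure from the old one is
`n KL(η, θ) = O(1 + log (2 + t² / (θ n α²)) t² / α²)`, and by the data processing inequality,
applied to the indicator of the event, its probability under the old one is at least
`exp (-2 n KL(η, θ)) / 4`.
-/

open ProbabilityTheory InformationTheory Measure
open scoped unitInterval

section

variable {α β : Type*} {mα : MeasurableSpace α} {mβ : MeasurableSpace β}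

lemma klDiv_eq_of_measurePreserving {μ ν : Measure α} {μ' ν' : Measure β} [IsFiniteMeasure μ]
    [IsFiniteMeasure ν] (e : α ≃ᵐ β) (hμ : MeasurePreserving e μ μ')
    (hν : MeasurePreserving e ν ν') : klDiv μ' ν' = klDiv μ ν := by
  obtain rfl := hμ.map_eq
  obtain rfl := hν.map_eq
  apply le_antisymm (klDiv_map_le μ ν e.measurable)
  simpa only [MeasurableEquiv.map_symm_map] using
    klDiv_map_le (μ.map e) (ν.map e) e.symm.measurable

lemma klDiv_prod (μ₁ ν₁ : Measure α) (μ₂ ν₂ : Measure β) [IsProbabilityMeasure μ₁]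
    [IsFiniteMeasure ν₁] [IsProbabilityMeasure μ₂] [IsProbabilityMeasure ν₂] :
    klDiv (μ₁.prod μ₂) (ν₁.prod ν₂) = klDiv μ₁ ν₁ + klDiv μ₂ ν₂ := by
  have hswap : klDiv (μ₁.prod μ₂) (μ₁.prod ν₂) = klDiv (μ₂.prod μ₁) (ν₂.prod μ₁) :=
    klDiv_eq_of_measurePreserving MeasurableEquiv.prodComm measurePreserving_swap
      measurePreserving_swap
  simp only [← compProd_const] at hswap ⊢
  rw [klDiv_compProd_eq_add, hswap, klDiv_compProd_left]

lemma klDiv_pi_fin {n : ℕ} {α : Fin n → Type*} [∀ i, MeasurableSpace (α i)]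
    (μ ν : ∀ i, Measure (α i)) [∀ i, IsProbabilityMeasure (μ i)]
    [∀ i, IsProbabilityMeasure (ν i)] :
    klDiv (Measure.pi μ) (Measure.pi ν) = ∑ i, klDiv (μ i) (ν i) := by
  induction n with
  | zero => rw [pi_of_empty μ, pi_of_empty ν, klDiv_self, Finset.univ_eq_empty, Finset.sum_empty]
  | succ n ih =>
    rw [← klDiv_eq_of_measurePreserving _ (measurePreserving_piFinSuccAbove μ 0)
      (measurePreserving_piFinSuccAbove ν 0), klDiv_prod, ih, Fin.sum_univ_succ]
    rfl

lemma klDiv_pi {ι : Type*} [Fintype ι] {α : ι → Type*} [∀ i, MeasurableSpace (α i)]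
    (μ ν : ∀ i, Measure (α i)) [∀ i, IsProbabilityMeasure (μ i)]
    [∀ i, IsProbabilityMeasure (ν i)] :
    klDiv (Measure.pi μ) (Measure.pi ν) = ∑ i, klDiv (μ i) (ν i) := by
  let e := (Fintype.equivFin ι).symm
  rw [klDiv_eq_of_measurePreserving _ (measurePreserving_piCongrLeft μ e)
    (measurePreserving_piCongrLeft ν e), klDiv_pi_fin, e.sum_comp (fun i ↦ klDiv (μ i) (ν i))]

end

/-- The relative entropy of the Bernoulli law with parameter `p` from the one with parameter `q`.
With `Real.log 0 = 0` the formula is valid for `p ∈ [0, 1]` and `q ∈ (0, 1)`. -/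
noncomputable def binaryKL (p q : ℝ) : ℝ :=
  p * Real.log (p / q) + (1 - p) * Real.log ((1 - p) / (1 - q))

section

variable {X : Type*} [MeasurableSpace X] {x y : X}

lemma bernoulliMeasure_eq_ofReal_smul_dirac (x y : X) (p : I) :
    bernoulliMeasure x y p = ENNReal.ofReal p • dirac x + ENNReal.ofReal (1 - p) • dirac y := by
  rw [bernoulliMeasure_def, ENNReal.ofReal_eq_coe_nnreal p.2.1,
    ENNReal.ofReal_eq_coe_nnreal (unitInterval.one_minus_nonneg p)]
  rfl

lemma eq_bernoulliMeasure [MeasurableSingletonClass X] {μ : Measure X} [IsProbabilityMeasure μ]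
    (hxy : x ≠ y) {p : I} (hx : μ {x} = ENNReal.ofReal p) (hy : μ {y} = ENNReal.ofReal (1 - p)) :
    μ = bernoulliMeasure x y p := by
  refine (eq_of_le_of_isProbabilityMeasure ?_).symm
  rw [bernoulliMeasure_eq_ofReal_smul_dirac, ← hx, ← hy, ← restrict_singleton,
    ← restrict_singleton, ← restrict_union (by simpa) (measurableSet_singleton y)]
  exact restrict_le_self

lemma map_mem_eq_bernoulliMeasure {μ : Measure X} [IsProbabilityMeasure μ] {s : Set X}
    (hs : MeasurableSet s) :
    μ.map (· ∈ s)
      = bernoulliMeasure True False ⟨μ.real s, measureReal_nonneg, measureReal_le_one⟩ := by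
  have hmeas : Measurable (· ∈ s) := measurable_mem.mpr hs
  have := isProbabilityMeasure_map hmeas.aemeasurable (μ := μ)
  apply eq_bernoulliMeasure true_ne_false
  · rw [map_apply hmeas (measurableSet_singleton _)]
    simp
  · rw [map_apply hmeas (measurableSet_singleton _)]
    have : (· ∈ s) ⁻¹' {False} = sᶜ := by ext; simp
    rw [this, ← probReal_compl_eq_one_sub hs, ofReal_measureReal]

lemma klDiv_bernoulliMeasure [MeasurableSingletonClass X] (hxy : x ≠ y) (p : I) {q : I}
    (hq₀ : 0 < q) (hq₁ : q < 1) :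
    klDiv (bernoulliMeasure x y p) (bernoulliMeasure x y q) = ENNReal.ofReal (binaryKL p q) := by
  classical
  have hq₀' : 0 < (q : ℝ) := hq₀
  have hq₁' : 0 < 1 - (q : ℝ) := sub_pos.mpr hq₁
  have hp₀ : 0 ≤ (p : ℝ) := p.2.1
  have hp₁ : 0 ≤ 1 - (p : ℝ) := unitInterval.one_minus_nonneg p
  let f : X → ℝ := fun z ↦ if z = x then p / q else (1 - p) / (1 - q)
  have hfx : f x = p / q := if_pos rfl
  have hfy : f y = (1 - p) / (1 - q) := if_neg hxy.symm
  have hf : Measurable f :=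
    measurable_const.ite (measurableSet_singleton x) measurable_const
  have hf₀ (z : X) : 0 ≤ f z := by unfold f; split_ifs <;> positivity
  have hdensity : bernoulliMeasure x y p
      = (bernoulliMeasure x y q).withDensity (fun z ↦ ENNReal.ofReal (f z)) := by
    simp only [bernoulliMeasure_eq_ofReal_smul_dirac, withDensity_add_measure,
      withDensity_smul_measure, dirac_withDensity, hfx, hfy, smul_smul]
    rw [← ofReal_mul hq₀'.le, ← ofReal_mul hq₁'.le, mul_div_cancel₀ _ hq₀'.ne',
      mul_div_cancel₀ _ hq₁'.ne']
  have hrn : ∀ᵐ z ∂bernoulliMeasure x y q,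
      ((bernoulliMeasure x y p).rnDeriv (bernoulliMeasure x y q) z).toReal = f z := by
    rw [hdensity]
    filter_upwards [rnDeriv_withDensity (bernoulliMeasure x y q) hf.ennreal_ofReal] with z hz
    rw [hz, toReal_ofReal (hf₀ z)]
  have hac : bernoulliMeasure x y p ≪ bernoulliMeasure x y q :=
    hdensity ▸ withDensity_absolutelyContinuous _ _
  rw [← ofReal_toReal (a := klDiv _ _), toReal_klDiv_eq_integral_klFun hac,
    integral_congr_ae (hrn.mono fun z hz ↦ congrArg klFun hz), integral_bernoulliMeasure, hfx, hfy]
  · congr 1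
    simp only [klFun_apply, binaryKL, smul_eq_mul]
    field
  · exact klDiv_ne_top hac (integrable_bernoulliMeasure ..)

end

lemma binaryKL_eq {p q : ℝ} (hq₀ : q ≠ 0) (hq₁ : q ≠ 1) :
    binaryKL p q = p * Real.log q⁻¹ + (1 - p) * Real.log (1 - q)⁻¹ - Real.binEntropy p := by
  have hsplit (a : ℝ) {b : ℝ} (hb : b ≠ 0) :
      a * Real.log (a / b) = a * Real.log b⁻¹ - a * Real.log a⁻¹ := by
    rcases eq_or_ne a 0 with rfl | ha
    · simp
    · rw [Real.log_div ha hb, Real.log_inv, Real.log_inv]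
      ring
  rw [binaryKL, Real.binEntropy, hsplit p hq₀, hsplit (1 - p) (sub_ne_zero.mpr hq₁.symm)]
  ring

lemma mul_log_inv_sub_log_two_le_binaryKL {p q : ℝ} (hp₁ : p ≤ 1) (hq₀ : 0 < q)
    (hq₁ : q < 1) : p * Real.log q⁻¹ - Real.log 2 ≤ binaryKL p q := by
  have hlog : 0 ≤ Real.log (1 - q)⁻¹ :=
    Real.log_nonneg ((one_le_inv₀ (by linarith)).mpr (by linarith))
  rw [binaryKL_eq hq₀.ne' hq₁.ne]
  have := Real.binEntropy_le_log_two (p := p)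
  have := mul_nonneg (sub_nonneg.mpr hp₁) hlog
  linarith

lemma binaryKL_le_chiSquare {p q : ℝ} (hp₀ : 0 ≤ p) (hp₁ : p ≤ 1) (hq₀ : 0 < q) (hq₁ : q < 1) :
    binaryKL p q ≤ (p - q) ^ 2 / (q * (1 - q)) := by
  have hlog {a b : ℝ} (ha : 0 ≤ a) (hb : 0 < b) : a * Real.log (a / b) ≤ a * (a / b - 1) := by
    rcases ha.eq_or_lt with rfl | ha'
    · simp
    · gcongr
      exact Real.log_le_sub_one_of_pos (by positivity)
  have hq₁' : 0 < 1 - q := sub_pos.mpr hq₁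
  calc binaryKL p q
      ≤ p * (p / q - 1) + (1 - p) * ((1 - p) / (1 - q) - 1) :=
        add_le_add (hlog hp₀ hq₀) (hlog (sub_nonneg.mpr hp₁) hq₁')
    _ = (p - q) ^ 2 / (q * (1 - q)) := by field

lemma binaryKL_le_mul_log {p q : ℝ} (hqp : q ≤ p) (hp₁ : p ≤ 1) (hq₁ : q < 1) :
    binaryKL p q ≤ p * Real.log (p / q) := by
  have hlog : Real.log ((1 - p) / (1 - q)) ≤ 0 :=
    Real.log_nonpos (div_nonneg (by linarith) (by linarith))
      (div_le_one_of_le₀ (by linarith) (by linarith))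
  have := mul_nonpos_of_nonneg_of_nonpos (sub_nonneg.mpr hp₁) hlog
  unfold binaryKL
  linarith

lemma mul_binaryKL_sq_div_le_of_le {n a d : ℝ} (ha : 0 < a) (hd : 0 ≤ d)
    (hda : d ≤ a) (han : 100 * a ^ 2 ≤ n) :
    n * binaryKL ((a + d) ^ 2 / n) (a ^ 2 / n) ≤ 10 * d ^ 2 := by
  have hn : 0 < n := (by positivity : 0 < 100 * a ^ 2).trans_le han
  have hgap : 0 < n - a ^ 2 := by nlinarith
  have hp₁ : (a + d) ^ 2 / n ≤ 1 := by rw [div_le_one hn]; nlinarith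
  have hq₁ : a ^ 2 / n < 1 := by rw [div_lt_one hn]; linarith
  calc n * binaryKL ((a + d) ^ 2 / n) (a ^ 2 / n)
      ≤ n * (((a + d) ^ 2 / n - a ^ 2 / n) ^ 2 / (a ^ 2 / n * (1 - a ^ 2 / n))) := by
        gcongr
        exact binaryKL_le_chiSquare (by positivity) hp₁ (by positivity) hq₁
    _ = n * ((2 * a + d) / a) ^ 2 / (n - a ^ 2) * d ^ 2 := by field
    _ ≤ 10 * d ^ 2 := by
        gcongr
        have hratio : (2 * a + d) / a ≤ 3 := by rw [div_le_iff₀ ha]; linarith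
        rw [div_le_iff₀ hgap]
        calc n * ((2 * a + d) / a) ^ 2 ≤ n * 3 ^ 2 := by gcongr
          _ ≤ 10 * (n - a ^ 2) := by nlinarith

lemma mul_binaryKL_sq_div_le_log {n a b : ℝ} (ha : 0 < a) (hab : a ≤ b) (hbn : b ^ 2 ≤ n)
    (han : a ^ 2 < n) :
    n * binaryKL (b ^ 2 / n) (a ^ 2 / n) ≤ b ^ 2 * Real.log ((b / a) ^ 2) := by
  have hn : 0 < n := (sq_nonneg a).trans_lt han
  calc n * binaryKL (b ^ 2 / n) (a ^ 2 / n)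
      ≤ n * (b ^ 2 / n * Real.log (b ^ 2 / n / (a ^ 2 / n))) := by
        gcongr
        exact binaryKL_le_mul_log (by gcongr) ((div_le_one hn).mpr hbn) ((div_lt_one hn).mpr han)
    _ = b ^ 2 * Real.log ((b / a) ^ 2) := by
        rw [div_div_div_cancel_right₀ hn.ne', div_pow]
        field

lemma log_sixteen_mul_le {x : ℝ} (hx : 0 < x) : Real.log (16 * x) ≤ 4 * Real.log (2 + x) := by
  calc Real.log (16 * x) ≤ Real.log ((2 + x) ^ 4) := by
        gcongr
        nlinarith [pow_pos hx 2, pow_pos hx 3, pow_pos hx 4]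
    _ = 4 * Real.log (2 + x) := by rw [Real.log_pow]; norm_num

lemma one_half_le_log_two_add {x : ℝ} (hx : 0 ≤ x) : 1 / 2 ≤ Real.log (2 + x) := by
  have := Real.log_two_gt_d9
  have : Real.log 2 ≤ Real.log (2 + x) := by gcongr; linarith
  linarith

lemma mul_binaryKL_shift_le {n a s : ℝ} (ha : 10 ≤ a) (hs : 0 ≤ s) (han : 100 * a ^ 2 ≤ n)
    (hsn : (a + (4 + s)) ^ 2 ≤ n) :
    n * binaryKL ((a + (4 + s)) ^ 2 / n) (a ^ 2 / n)
      ≤ 320 + 64 * (Real.log (2 + s ^ 2 / a ^ 2) * s ^ 2) := by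
  have ha₀ : 0 < a := by linarith
  have hlog := one_half_le_log_two_add (x := s ^ 2 / a ^ 2) (by positivity)
  -- For moderate `s` the cost is quadratic; the logarithm is needed only for `4 + s ≥ a`.
  rcases le_total (4 + s) a with hsa | has
  · have hbound := mul_binaryKL_sq_div_le_of_le ha₀ (by linarith) hsa han
    have : 1 / 2 * s ^ 2 ≤ Real.log (2 + s ^ 2 / a ^ 2) * s ^ 2 := by gcongr
    nlinarith [sq_nonneg (s - 4)]
  · have hb : a + (4 + s) ≤ 4 * s := by linarith
    have hs₀ : 0 < s := by linarith
    calc n * binaryKL ((a + (4 + s)) ^ 2 / n) (a ^ 2 / n)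
        ≤ (a + (4 + s)) ^ 2 * Real.log (((a + (4 + s)) / a) ^ 2) :=
          mul_binaryKL_sq_div_le_log ha₀ (by linarith) hsn (by nlinarith)
      _ ≤ (4 * s) ^ 2 * Real.log ((4 * s / a) ^ 2) := by
          have : 1 ≤ (a + (4 + s)) / a := by rw [one_le_div ha₀]; linarith
          gcongr
          exact Real.log_nonneg (one_le_pow₀ this)
      _ = (4 * s) ^ 2 * Real.log (16 * (s ^ 2 / a ^ 2)) := by congr 2; ring
      _ ≤ (4 * s) ^ 2 * (4 * Real.log (2 + s ^ 2 / a ^ 2)) := by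
          gcongr
          exact log_sixteen_mul_le (by positivity)
      _ ≤ 320 + 64 * (Real.log (2 + s ^ 2 / a ^ 2) * s ^ 2) := by linarith

-- The data processing inequality for the indicator of `A` reduces this to Bernoulli laws.
lemma exp_neg_two_mul_klDiv_div_four_le {Ω : Type*} {mΩ : MeasurableSpace Ω} {μ ν : Measure Ω}
    [IsProbabilityMeasure μ] [IsProbabilityMeasure ν] {A : Set Ω} (hA : MeasurableSet A)
    (hν : 1 / 2 ≤ ν.real A) (hfin : klDiv ν μ ≠ ∞) :
    Real.exp (-(2 * (klDiv ν μ).toReal)) / 4 ≤ μ.real A := by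
  have hμ₀ : μ.real A ≠ 0 := by
    intro h
    have : ν A = 0 := (klDiv_ne_top_iff.mp hfin).1 ((measureReal_eq_zero_iff).mp h)
    rw [measureReal_def, this] at hν
    norm_num at hν
  rcases (measureReal_le_one (μ := μ) (s := A)).eq_or_lt with hμ₁ | hμ₁
  · rw [hμ₁]
    have : Real.exp (-(2 * (klDiv ν μ).toReal)) ≤ 1 := Real.exp_le_one_iff.mpr (by simp)
    linarith
  have hμ_pos : 0 < μ.real A := measureReal_nonneg.lt_of_ne' hμ₀
  have hbinary : binaryKL (ν.real A) (μ.real A) ≤ (klDiv ν μ).toReal := by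
    rw [← ENNReal.ofReal_le_iff_le_toReal hfin]
    have := klDiv_map_le ν μ (measurable_mem.mpr hA)
    rwa [map_mem_eq_bernoulliMeasure hA, map_mem_eq_bernoulliMeasure hA,
      klDiv_bernoulliMeasure true_ne_false _ hμ_pos hμ₁] at this
  have hlower := mul_log_inv_sub_log_two_le_binaryKL (measureReal_le_one (μ := ν) (s := A))
    hμ_pos hμ₁
  have hlog_nonneg : 0 ≤ Real.log (μ.real A)⁻¹ :=
    Real.log_nonneg ((one_le_inv₀ hμ_pos).mpr hμ₁.le)
  have hhalf : 1 / 2 * Real.log (μ.real A)⁻¹ ≤ ν.real A * Real.log (μ.real A)⁻¹ := by gcongr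
  calc Real.exp (-(2 * (klDiv ν μ).toReal)) / 4
      = Real.exp (-(2 * ((klDiv ν μ).toReal + Real.log 2))) := by
        rw [mul_add, neg_add, Real.exp_add, Real.exp_neg (2 * Real.log 2), two_mul (Real.log 2),
          Real.exp_add, Real.exp_log two_pos]
        norm_num [div_eq_mul_inv]
    _ ≤ Real.exp (Real.log (μ.real A)) := by
        gcongr
        rw [Real.log_inv] at hhalf hlower
        linarith
    _ = μ.real A := Real.exp_log hμ_pos

lemma abs_sqrt_sub_sqrt_mul_sqrt_le (x y : ℝ) : |√x - √y| * √y ≤ |x - y| := by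
  rcases le_total y 0 with hy | hy
  · rw [Real.sqrt_eq_zero_of_nonpos hy, mul_zero]
    exact abs_nonneg _
  rcases le_total x 0 with hx | hx
  · rw [Real.sqrt_eq_zero_of_nonpos hx, zero_sub, abs_neg, abs_of_nonneg (Real.sqrt_nonneg y),
      Real.mul_self_sqrt hy, abs_sub_comm]
    exact (by linarith : y ≤ y - x).trans (le_abs_self _)
  · calc |√x - √y| * √y ≤ |√x - √y| * |√x + √y| := by
          gcongr
          rw [abs_of_nonneg (by positivity)]
          exact le_add_of_nonneg_left (Real.sqrt_nonneg x)
      _ = |x - y| := by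
          rw [← abs_mul, mul_comm, ← sq_sub_sq, Real.sq_sqrt hx, Real.sq_sqrt hy]

lemma meas_ge_abs_sqrt_sub_sqrt_integral_le {Ω : Type*} {mΩ : MeasurableSpace Ω} {μ : Measure Ω}
    [IsFiniteMeasure μ] {Z : Ω → ℝ} (hZ : MemLp Z 2 μ) (hpos : 0 < μ[Z]) {c : ℝ} (hc : 0 < c) :
    μ {ω | c ≤ |√(Z ω) - √(μ[Z])|} ≤ ENNReal.ofReal (Var[Z; μ] / (c ^ 2 * μ[Z])) := by
  have hsub : {ω | c ≤ |√(Z ω) - √(μ[Z])|} ⊆ {ω | c * √(μ[Z]) ≤ |Z ω - μ[Z]|} := by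
    intro ω (hω : c ≤ _)
    exact (by gcongr : c * √(μ[Z]) ≤ |√(Z ω) - √(μ[Z])| * √(μ[Z])).trans
      (abs_sqrt_sub_sqrt_mul_sqrt_le _ _)
  have hcheb := meas_ge_le_variance_div_sq hZ (mul_pos hc (Real.sqrt_pos.mpr hpos))
  rw [mul_pow, Real.sq_sqrt hpos.le] at hcheb
  exact (measure_mono hsub).trans hcheb

lemma IsMedian.le_of_measure_lt {Ω : Type*} {mΩ : MeasurableSpace Ω} {μ : Measure Ω} {Z : Ω → ℝ}
    {m b : ℝ} (hm : IsMedian μ Z m) (hb : μ {ω | b ≤ Z ω} < 2⁻¹) : m ≤ b := by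
  by_contra! hbm
  exact (hm.1.trans (measure_mono fun _ hω ↦ hbm.le.trans hω)).not_gt hb

/-- The law of `n` independent Bernoulli variables with parameter `p`, as a measure on `ℝⁿ`. Kept an
`abbrev` so that instances and lemmas about `Measure.pi` apply to it. -/
noncomputable abbrev bernoulliPi (n : ℕ) (p : I) : Measure (Fin n → ℝ) :=
  Measure.pi fun _ ↦ bernoulliMeasure 1 0 p

section

variable {n : ℕ} {p q : I}

lemma IsBernoulli.eq_bernoulliMeasure {μ : Measure ℝ} (h : IsBernoulli μ p) :
    μ = bernoulliMeasure 1 0 p :=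
  have := h.1
  _root_.eq_bernoulliMeasure one_ne_zero h.2.1 h.2.2

lemma memLp_two_id_bernoulliMeasure (x y : ℝ) (p : I) : MemLp id 2 (bernoulliMeasure x y p) := by
  rw [memLp_two_iff_integrable_sq measurable_id.aestronglyMeasurable]
  exact integrable_bernoulliMeasure ..

lemma variance_id_bernoulliMeasure (x y : ℝ) (p : I) :
    Var[id; bernoulliMeasure x y p] = p * (1 - p) * (x - y) ^ 2 := by
  rw [variance_eq_sub (memLp_two_id_bernoulliMeasure x y p)]
  simp only [Pi.pow_apply, id_eq, integral_bernoulliMeasure, smul_eq_mul]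
  ring

lemma memLp_sum_bernoulliPi (n : ℕ) (p : I) :
    MemLp (fun y : Fin n → ℝ ↦ ∑ i, y i) 2 (bernoulliPi n p) :=
  memLp_finsetSum _ fun i _ ↦
    (memLp_two_id_bernoulliMeasure 1 0 p).comp_measurePreserving (measurePreserving_eval _ i)

lemma integral_eval_bernoulliPi (p : I) (i : Fin n) :
    ∫ y, y i ∂(bernoulliPi n p) = p := by
  calc ∫ y, y i ∂(bernoulliPi n p) = ∫ x : ℝ, x ∂(bernoulliMeasure 1 0 p) :=
        integral_comp_eval (μ := fun _ ↦ bernoulliMeasure (1 : ℝ) 0 p) (f := fun x : ℝ ↦ x)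
          measurable_id.aestronglyMeasurable
    _ = p := by simp [integral_bernoulliMeasure]

lemma integral_sum_bernoulliPi (n : ℕ) (p : I) :
    ∫ y, ∑ i, y i ∂(bernoulliPi n p) = n * p := by
  rw [integral_finsetSum _ fun i _ ↦ integrable_comp_eval
    (μ := fun _ ↦ bernoulliMeasure (1 : ℝ) 0 p) (f := fun x : ℝ ↦ x)
    (integrable_bernoulliMeasure ..)]
  simp only [integral_eval_bernoulliPi, Finset.sum_const, Finset.card_univ, Fintype.card_fin,
    nsmul_eq_mul]

lemma variance_sum_bernoulliPi (n : ℕ) (p : I) :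
    Var[fun y ↦ ∑ i, y i; bernoulliPi n p] = n * (p * (1 - p)) := by
  have h := variance_sum_pi (μ := fun _ : Fin n ↦ bernoulliMeasure (1 : ℝ) 0 p) (X := fun _ ↦ id)
    fun _ ↦ memLp_two_id_bernoulliMeasure 1 0 p
  simp only [variance_id_bernoulliMeasure, sub_zero, one_pow, mul_one, Finset.sum_const,
    Finset.card_univ, Fintype.card_fin, nsmul_eq_mul] at h
  rw [← h]
  congr 1
  ext y
  simp

lemma bernoulliPi_two_le_abs_sqrt_sum_sub_le (hnp : 0 < n * (p : ℝ)) :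
    bernoulliPi n p {y | 2 ≤ |√(∑ i, y i) - √(n * p)|} ≤ ENNReal.ofReal (1 / 4) := by
  have h := meas_ge_abs_sqrt_sub_sqrt_integral_le (memLp_sum_bernoulliPi n p)
    (by rwa [integral_sum_bernoulliPi]) two_pos
  rw [integral_sum_bernoulliPi, variance_sum_bernoulliPi] at h
  refine h.trans (ENNReal.ofReal_le_ofReal ?_)
  rw [div_le_div_iff₀ (by positivity) four_pos]
  nlinarith [p.2.1]

lemma ae_euclNorm_const_mul_eq (n : ℕ) (p : I) {α : ℝ} (hα : 0 ≤ α) :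
    ∀ᵐ y ∂(bernoulliPi n p), euclNorm (fun i ↦ α * y i) = α * √(∑ i, y i) := by
  have hcoord : ∀ᵐ x ∂(bernoulliMeasure (1 : ℝ) 0 p), x ^ 2 = x := by
    simp [bernoulliMeasure_def, ae_add_measure_iff, ae_smul_measure, ae_dirac_eq]
  have hall : ∀ᵐ y ∂(bernoulliPi n p), ∀ i, y i ^ 2 = y i :=
    ae_all_iff.mpr fun i ↦ (measurePreserving_eval
      (fun _ ↦ bernoulliMeasure (1 : ℝ) 0 p) i).quasiMeasurePreserving.ae hcoord
  filter_upwards [hall] with y hy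
  simp only [euclNorm, mul_pow, hy]
  rw [← Finset.mul_sum, Real.sqrt_mul (sq_nonneg α), Real.sqrt_sq hα]

lemma IsMedian.le_mul_sqrt_add_two {α m : ℝ} (hα : 0 < α) (hnp : 0 < n * (p : ℝ))
    (hm : IsMedian (bernoulliPi n p) (fun y ↦ euclNorm (fun i ↦ α * y i)) m) :
    m ≤ α * (√(n * p) + 2) := by
  refine hm.le_of_measure_lt ?_
  calc bernoulliPi n p {y | α * (√(n * p) + 2) ≤ euclNorm (fun i ↦ α * y i)}
      ≤ bernoulliPi n p {y | 2 ≤ |√(∑ i, y i) - √(n * p)|} := by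
        refine measure_mono_ae ?_
        filter_upwards [ae_euclNorm_const_mul_eq n p hα.le] with y hy
          (hle : α * (√(n * p) + 2) ≤ euclNorm (fun i ↦ α * y i))
        rw [hy, mul_le_mul_iff_right₀ hα] at hle
        exact (le_sub_iff_add_le'.mpr hle).trans (le_abs_self _)
    _ ≤ ENNReal.ofReal (1 / 4) := bernoulliPi_two_le_abs_sqrt_sum_sub_le hnp
    _ < 2⁻¹ := by
        rw [← ofReal_ofNat 2, ← ofReal_inv_of_pos two_pos]
        exact ofReal_lt_ofReal_iff_of_nonneg (by norm_num) |>.mpr (by norm_num)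

lemma measurableSet_le_sqrt_sum (n : ℕ) (r : ℝ) :
    MeasurableSet {y : Fin n → ℝ | r ≤ √(∑ i, y i)} :=
  measurableSet_le measurable_const (by fun_prop)

lemma half_le_bernoulliPi_sqrt_sub_two_le (hnp : 0 < n * (p : ℝ)) :
    1 / 2 ≤ (bernoulliPi n p).real {y | √(n * p) - 2 ≤ √(∑ i, y i)} := by
  have hcompl : (bernoulliPi n p).real {y | √(n * p) - 2 ≤ √(∑ i, y i)}ᶜ ≤ 1 / 4 := by
    refine toReal_le_of_le_ofReal (by norm_num) ((measure_mono ?_).trans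
      (bernoulliPi_two_le_abs_sqrt_sum_sub_le hnp))
    intro y (hy : ¬ √(n * p) - 2 ≤ √(∑ i, y i))
    change 2 ≤ |√(∑ i, y i) - √(n * p)|
    rw [abs_sub_comm]
    exact (by linarith : 2 ≤ √(n * p) - √(∑ i, y i)).trans (le_abs_self _)
  rw [probReal_compl_eq_one_sub (measurableSet_le_sqrt_sum n _)] at hcompl
  linarith

lemma klDiv_bernoulliPi (n : ℕ) (p : I) (hq₀ : 0 < q) (hq₁ : q < 1) :
    klDiv (bernoulliPi n p) (bernoulliPi n q) = ENNReal.ofReal (n * binaryKL p q) := by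
  rw [klDiv_pi, Finset.sum_const, klDiv_bernoulliMeasure one_ne_zero p hq₀ hq₁, Finset.card_univ,
    Fintype.card_fin, nsmul_eq_mul, ofReal_mul n.cast_nonneg, ofReal_natCast]

lemma klDiv_bernoulliPi_shift_le {a s : ℝ} (ha : 10 ≤ a) (hs : 0 ≤ s) (hq_le : (q : ℝ) ≤ 1 / 100)
    (hp : n * (p : ℝ) = (a + (4 + s)) ^ 2) (hq : n * (q : ℝ) = a ^ 2) :
    klDiv (bernoulliPi n p) (bernoulliPi n q)
      ≤ ENNReal.ofReal (320 + 64 * (Real.log (2 + s ^ 2 / a ^ 2) * s ^ 2)) := by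
  have hnq : 0 < n * (q : ℝ) := hq ▸ by positivity
  have hn : (0 : ℝ) < n := pos_of_mul_pos_left hnq q.2.1
  have hq₀ : 0 < (q : ℝ) := pos_of_mul_pos_right hnq hn.le
  have hq₁ : (q : ℝ) < 1 := hq_le.trans_lt (by norm_num)
  have han : 100 * a ^ 2 ≤ n := by rw [← hq]; nlinarith
  have hsn : (a + (4 + s)) ^ 2 ≤ n := hp ▸ mul_le_of_le_one_right hn.le p.2.2
  rw [klDiv_bernoulliPi n p hq₀ hq₁, eq_div_of_mul_eq hn.ne' ((mul_comm _ _).trans hp),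
    eq_div_of_mul_eq hn.ne' ((mul_comm _ _).trans hq)]
  exact ofReal_le_ofReal (mul_binaryKL_shift_le ha hs han hsn)

lemma exp_neg_div_four_le_bernoulliPi_sqrt_sum {s : ℝ} (hnq : 100 ≤ n * (q : ℝ))
    (hq : (q : ℝ) ≤ 1 / 100) (hs₀ : 0 ≤ s) (hs : s ≤ √n / 4) :
    Real.exp (-(640 + 128 * (Real.log (2 + s ^ 2 / (n * q)) * s ^ 2))) / 4
      ≤ (bernoulliPi n q).real {y | √(n * q) + 2 + s ≤ √(∑ i, y i)} := by
  set a := √(n * q)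
  have hn : (0 : ℝ) < n := pos_of_mul_pos_left (by linarith) q.2.1
  have ha_sq : n * (q : ℝ) = a ^ 2 := (Real.sq_sqrt (by linarith)).symm
  have ha : 10 ≤ a := Real.le_sqrt_of_sq_le (by linarith)
  have hna : 10 * a ≤ √n := Real.le_sqrt_of_sq_le (by nlinarith)
  have hsn : (a + (4 + s)) ^ 2 ≤ n := by
    rw [← Real.le_sqrt (by positivity) hn.le]
    linarith
  -- Of the shift `4 + s`, `2` pays for the median bound and `2` for the fluctuation of `√S`.
  let p : I := ⟨(a + (4 + s)) ^ 2 / n, by positivity, (div_le_one hn).mpr hsn⟩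
  have hp : n * (p : ℝ) = (a + (4 + s)) ^ 2 := mul_div_cancel₀ _ hn.ne'
  have hcost := klDiv_bernoulliPi_shift_le ha hs₀ hq hp ha_sq
  have htypical := half_le_bernoulliPi_sqrt_sub_two_le (n := n) (p := p) (by rw [hp]; positivity)
  rw [hp, Real.sqrt_sq (by positivity), show a + (4 + s) - 2 = a + 2 + s by ring] at htypical
  have hlog := one_half_le_log_two_add (x := s ^ 2 / a ^ 2) (by positivity)
  have hcost_toReal := toReal_le_of_le_ofReal (by positivity) hcost
  calc Real.exp (-(640 + 128 * (Real.log (2 + s ^ 2 / (n * q)) * s ^ 2))) / 4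
      ≤ Real.exp (-(2 * (klDiv (bernoulliPi n p) (bernoulliPi n q)).toReal)) / 4 := by
        rw [ha_sq]
        gcongr
        linarith
    _ ≤ (bernoulliPi n q).real {y | a + 2 + s ≤ √(∑ i, y i)} :=
        exp_neg_two_mul_klDiv_div_four_le (measurableSet_le_sqrt_sum n _) htypical
          (ne_top_of_le_ne_top ofReal_ne_top hcost)

lemma ofReal_exp_neg_div_four_le_bernoulliPi_euclNorm {α m t : ℝ} (hnq : 100 ≤ n * (q : ℝ))
    (hq : (q : ℝ) ≤ 1 / 100) (hα : 0 < α)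
    (hm : IsMedian (bernoulliPi n q) (fun y ↦ euclNorm (fun i ↦ α * y i)) m)
    (ht₀ : 0 ≤ t) (ht : t ≤ α * √n / 4) :
    ENNReal.ofReal (Real.exp (-(640 + 128 *
        (Real.log (2 + t ^ 2 / (q * n * α ^ 2)) * t ^ 2 / α ^ 2))) / 4)
      ≤ bernoulliPi n q {y | m + t ≤ euclNorm (fun i ↦ α * y i)} := by
  have hmed := hm.le_mul_sqrt_add_two hα (by linarith)
  have htail := exp_neg_div_four_le_bernoulliPi_sqrt_sum (s := t / α) hnq hq (by positivity)
    (by rw [div_le_iff₀ hα]; linarith)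
  calc _ = ENNReal.ofReal (Real.exp (-(640 + 128 *
          (Real.log (2 + (t / α) ^ 2 / (n * q)) * (t / α) ^ 2))) / 4) := by
        rw [div_pow, div_div, mul_comm (α ^ 2), mul_comm (n : ℝ), mul_div_assoc]
    _ ≤ bernoulliPi n q {y | √(n * q) + 2 + t / α ≤ √(∑ i, y i)} :=
        ofReal_le_of_le_toReal htail
    _ ≤ bernoulliPi n q {y | m + t ≤ euclNorm (fun i ↦ α * y i)} := by
        refine measure_mono_ae ?_
        filter_upwards [ae_euclNorm_const_mul_eq n q hα.le] with y hy
          (hle : √(n * q) + 2 + t / α ≤ √(∑ i, y i))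
        change m + t ≤ euclNorm _
        rw [hy]
        calc m + t ≤ α * (√(n * q) + 2 + t / α) := by
              rw [mul_add, mul_div_cancel₀ t hα.ne']
              gcongr
          _ ≤ α * √(∑ i, y i) := by gcongr

end

lemma inv_mul_exp_neg_le {x : ℝ} (hx : 0 ≤ x) :
    (4 * Real.exp 640)⁻¹ * Real.exp (-(4 * Real.exp 640 * x))
      ≤ Real.exp (-(640 + 128 * x)) / 4 := by
  have := Real.add_one_le_exp 640
  calc (4 * Real.exp 640)⁻¹ * Real.exp (-(4 * Real.exp 640 * x))
      = Real.exp (-(640 + 4 * Real.exp 640 * x)) / 4 := by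
        rw [neg_add, Real.exp_add, Real.exp_neg 640]
        field
    _ ≤ Real.exp (-(640 + 128 * x)) / 4 := by
        gcongr
        linarith

theorem uptail_norm_scaled_bernoulli :
    ∃ cb Cb : ℝ, 0 < cb ∧ 1 < Cb ∧
    ∃ N : ℕ, ∀ n : ℕ, N ≤ n →
      ∀ α : ℝ, 0 < α →
      ∀ θ : ℝ, 1 / (cb * n) ≤ θ → θ ≤ cb →
      ∀ μ : Measure ℝ, IsBernoulli μ θ →
      -- `X = (α Y₁, …, α Yₙ)` where `Y` is the identity on the i.i.d. Bernoulli
      -- product space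
      ∀ m : ℝ, IsMedian (Measure.pi fun _ : Fin n => μ)
          (fun y => euclNorm (fun i => α * y i)) m →
      ∀ t : ℝ, 0 ≤ t → t ≤ α * Real.sqrt n / 4 →
        ENNReal.ofReal (Cb⁻¹ * Real.exp
            (-(Cb * Real.log (2 + t ^ 2 / (θ * n * α ^ 2)) * t ^ 2 / α ^ 2))) ≤
          (Measure.pi fun _ : Fin n => μ) {y | m + t ≤ euclNorm (fun i => α * y i)} := by
  have hexp := Real.add_one_le_exp 640
  refine ⟨1 / 100, 4 * Real.exp 640, by norm_num, by linarith, 1, ?_⟩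
  intro n hn α hα θ hθ₀ hθ₁ μ hμ m hm t ht₀ ht
  have hn₀ : (0 : ℝ) < n := Nat.cast_pos.mpr hn
  have hnθ : 100 ≤ n * θ := by
    rw [div_le_iff₀ (by positivity)] at hθ₀
    linarith
  have hθ : 0 ≤ θ := (by positivity : 0 ≤ 1 / (1 / 100 * (n : ℝ))).trans hθ₀
  lift θ to I using ⟨hθ, hθ₁.trans (by norm_num)⟩
  obtain rfl := hμ.eq_bernoulliMeasure
  refine (ofReal_le_ofReal ?_).trans
    (ofReal_exp_neg_div_four_le_bernoulliPi_euclNorm hnθ hθ₁ hα hm ht₀ ht)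
  have hlog := one_half_le_log_two_add (x := t ^ 2 / (θ * n * α ^ 2)) (by positivity)
  have hconst := inv_mul_exp_neg_le
    (x := Real.log (2 + t ^ 2 / (θ * n * α ^ 2)) * t ^ 2 / α ^ 2) (by positivity)
  simpa only [mul_assoc, mul_div_assoc] using hconst
end
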